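/- arXiv:2103.11514 — 3 statements merged into one kernel-verified Lean document; each statement's English description precedes it below -/
import Mathlib

section
/- Let k be a finite field with q elements, and let W₁, W₂ be m-dimensional k-vector spaces equipped with a perfect k-bilinear pairing B : W₁ × W₂ → k. Let a, n be integers with 0 ≤ a ≤ n ≤ m, and let C : kⁿ × kⁿ → k be the bilinear form C(x,y) = Σ_{i=1}^{n−a} x_i y_i (of rank n−a). Then the number of pairs (φ₁, φ₂) of injective k-linear maps φ₁ : kⁿ → W₁ and φ₂ : kⁿ → W₂ satisfying B(φ₁ x, φ₂ y) = C(x, y) for all x, y ∈ kⁿ equals q^{2mn − n²} · ∏_{i=0}^{n+a−1} (1 − q^{i−m}), an identity in ℚ. -/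
theorem cis_LI {k W : Type*} [Field k] [AddCommGroup W] [Module k W] {b a : ℕ}
    (T : W →ₗ[k] (Fin (b + a) → k)) (w : Fin (b + a) → W)
    (h : ∀ i j, T (w j) i = if (i : ℕ) < b ∧ i = j then 1 else 0) :
    LinearIndependent k w ↔ LinearIndependent k (fun j : Fin a => w (Fin.natAdd b j)) := by
  constructor
  · intro H
    exact H.comp _ (Fin.natAdd_injective a b)
  · intro H
    rw [Fintype.linearIndependent_iff] at H ⊢
    intro g hg
    have h1 : ∀ i : Fin b, g (Fin.castAdd a i) = 0 := by
      intro i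
      have := congrFun (congrArg T hg) (Fin.castAdd a i)
      simpa [map_sum, Finset.sum_apply, h] using this
    rw [Fin.sum_univ_add] at hg
    simp only [h1, zero_smul, Finset.sum_const_zero, zero_add] at hg
    have h2 := H _ hg
    intro i
    exact Fin.addCases (motive := fun i => g i = 0) h1 h2 i

/-- number of linearly independent families, as rational, without size restriction -/
theorem cis_card_LI {k K : Type*} [Field k] [Fintype k] [AddCommGroup K] [Module k K]
    [FiniteDimensional k K] (a : ℕ) :
    (Nat.card {u : Fin a → K // LinearIndependent k u} : ℚ) =
      ∏ i ∈ Finset.range a, ((Fintype.card k : ℚ) ^ Module.finrank k K - (Fintype.card k : ℚ) ^ i) := by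
  have : Finite K := Module.finite_of_finite k
  have := Fintype.ofFinite K
  by_cases h : a ≤ Module.finrank k K
  · rw [card_linearIndependent h, ← Fin.prod_univ_eq_prod_range (fun i => ((Fintype.card k : ℚ) ^ Module.finrank k K - (Fintype.card k : ℚ) ^ i)), Nat.cast_prod]
    refine Finset.prod_congr rfl fun i _ => ?_
    rw [Nat.cast_sub]
    · simp
    · exact Nat.pow_le_pow_right Fintype.card_pos (by omega)
  · have : IsEmpty {u : Fin a → K // LinearIndependent k u} := by
      refine ⟨fun u => h ?_⟩
      simpa using u.2.fintype_card_le_finrank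
    rw [Nat.card_of_isEmpty, Finset.prod_eq_zero (i := Module.finrank k K)]
    · simp
    · simpa using h
    · simp

theorem cis_fiber {k W : Type*} [Field k] [Fintype k] [AddCommGroup W] [Module k W]
    [FiniteDimensional k W] {b a : ℕ}
    (T : W →ₗ[k] (Fin (b + a) → k)) (hT : Function.Surjective T) :
    (Nat.card {w : Fin (b + a) → W // LinearIndependent k w ∧
      ∀ i j, T (w j) i = if (i : ℕ) < b ∧ i = j then 1 else 0} : ℚ) =
    ((Fintype.card k : ℚ) ^ Module.finrank k (LinearMap.ker T)) ^ b *
      ∏ i ∈ Finset.range a,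
        ((Fintype.card k : ℚ) ^ Module.finrank k (LinearMap.ker T) - (Fintype.card k : ℚ) ^ i) := by
  rw [← cis_card_LI]
  have : Finite W := Module.finite_of_finite k
  choose s hs using hT
  let c : Fin b → W := fun j => s (Pi.single (Fin.castAdd a j) 1)
  have key : ∀ w : Fin (b + a) → W, (∀ i j, T (w j) i = if (i : ℕ) < b ∧ i = j then 1 else 0) ↔
      (∀ j, w (Fin.castAdd a j) - c j ∈ LinearMap.ker T) ∧
        ∀ j, w (Fin.natAdd b j) ∈ LinearMap.ker T := by
    intro w
    simp only [LinearMap.mem_ker, map_sub, sub_eq_zero, c, hs]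
    constructor
    · intro h
      refine ⟨fun j => funext fun i => ?_, fun j => funext fun i => ?_⟩
      · rw [h, Pi.single_apply]
        refine if_congr ⟨fun h => h.2, fun h => ⟨by rw [h]; simp, h⟩⟩ rfl rfl
      · rw [h, if_neg]; · rfl
        rintro ⟨h1, rfl⟩
        simp at h1
    · rintro ⟨h1, h2⟩ i j
      refine Fin.addCases (fun j => ?_) (fun j => ?_) j
      · rw [h1, Pi.single_apply]
        refine if_congr ⟨fun h => ⟨by rw [h]; simp, h⟩, fun h => h.2⟩ rfl rfl
      · rw [h2, if_neg]; · rfl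
        rintro ⟨h1, rfl⟩
        simp at h1
  let e : {w : Fin (b + a) → W // LinearIndependent k w ∧
      ∀ i j, T (w j) i = if (i : ℕ) < b ∧ i = j then 1 else 0} ≃
      (Fin b → LinearMap.ker T) × {u : Fin a → LinearMap.ker T // LinearIndependent k u} :=
    { toFun := fun w => (fun j => ⟨_, ((key w.1).1 w.2.2).1 j⟩,
        ⟨fun j => ⟨_, ((key w.1).1 w.2.2).2 j⟩, by
          have := (cis_LI T w.1 w.2.2).1 w.2.1
          exact LinearIndependent.of_comp (LinearMap.ker T).subtype this⟩)
      invFun := fun p => ⟨Fin.append (fun j => (p.1 j : W) + c j) (fun j => (p.2.1 j : W)), by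
        have h := (key (Fin.append (fun j => (p.1 j : W) + c j) (fun j => (p.2.1 j : W)))).2
          ⟨fun j => by simp, fun j => by simp⟩
        refine ⟨(cis_LI T _ h).2 ?_, h⟩
        simp only [Fin.append_right]
        exact p.2.2.map' (LinearMap.ker T).subtype (by simp)⟩
      left_inv := by
        intro w
        ext j
        refine Fin.addCases (fun j => ?_) (fun j => ?_) j <;> simp
      right_inv := by
        rintro ⟨p, u, hu⟩
        simp }
  rw [Nat.card_congr e, Nat.card_prod, Nat.card_fun, Module.natCard_eq_pow_finrank (K := k)]
  simp

theorem cis_inj {k W : Type*} [Field k] [AddCommGroup W] [Module k W] {n : ℕ} (v : Fin n → W) :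
    LinearIndependent k v ↔ Function.Injective (Fintype.linearCombination k v) := by
  rw [Fintype.linearIndependent_iff, injective_iff_map_eq_zero]
  simp only [Fintype.linearCombination_apply, funext_iff, Pi.zero_apply]

theorem cis_surj {k W₁ W₂ : Type*} [Field k]
    [AddCommGroup W₁] [Module k W₁] [AddCommGroup W₂] [Module k W₂]
    [FiniteDimensional k W₁] [FiniteDimensional k W₂]
    (hW : Module.finrank k W₁ = Module.finrank k W₂)
    (B : W₁ →ₗ[k] W₂ →ₗ[k] k)
    (hB₂ : ∀ y : W₂, (∀ x : W₁, B x y = 0) → y = 0) {n : ℕ} (v : Fin n → W₁)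
    (hv : LinearIndependent k v) :
    Function.Surjective (LinearMap.pi (fun i => B (v i)) : W₂ →ₗ[k] (Fin n → k)) := by
  have hinj : Function.Injective B.flip := by
    rw [injective_iff_map_eq_zero]
    intro y hy
    exact hB₂ y fun x => by simpa using LinearMap.congr_fun hy x
  have hs : Function.Surjective B.flip :=
    (LinearMap.injective_iff_surjective_of_finrank_eq_finrank
      (by rw [Subspace.dual_finrank_eq, hW])).1 hinj
  intro c
  let f := Fintype.linearCombination k v
  obtain ⟨g, hg⟩ := f.exists_leftInverse_of_injective
    (LinearMap.ker_eq_bot.2 (cis_inj v |>.1 hv))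
  obtain ⟨y, hy⟩ := hs ((Fintype.linearCombination k c) ∘ₗ g)
  refine ⟨y, funext fun i => ?_⟩
  have h1 := LinearMap.congr_fun hy (v i)
  have h2 := LinearMap.congr_fun hg (Pi.single i 1)
  have h3 : f (Pi.single i 1) = v i := by simp [f]
  simp only [LinearMap.comp_apply, h3, LinearMap.id_apply] at h1 h2
  rw [h2] at h1
  simpa using h1

theorem cis_cond {k W₁ W₂ : Type*} [Field k]
    [AddCommGroup W₁] [Module k W₁] [AddCommGroup W₂] [Module k W₂]
    (B : W₁ →ₗ[k] W₂ →ₗ[k] k) (n b : ℕ) (v : Fin n → W₁) (w : Fin n → W₂) :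
    (∀ x y : Fin n → k, B (Fintype.linearCombination k v x) (Fintype.linearCombination k w y)
      = ∑ i : Fin n, if (i : ℕ) < b then x i * y i else 0) ↔
    ∀ i j, B (v i) (w j) = if (i : ℕ) < b ∧ i = j then 1 else 0 := by
  constructor
  · intro h i j
    have := h (Pi.single i 1) (Pi.single j 1)
    simp only [Fintype.linearCombination_apply_single, one_smul] at this
    rw [this, Finset.sum_eq_single i]
    · simp [Pi.single_apply, ite_and]
    · intro l _ hl
      simp [hl]
    · simp
  · intro h x y
    simp only [Fintype.linearCombination_apply, map_sum, LinearMap.sum_apply, map_smul,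
      LinearMap.smul_apply, h, smul_eq_mul]
    refine Finset.sum_congr rfl fun i _ => ?_
    rw [Finset.sum_eq_single i]
    · by_cases hi : (i : ℕ) < b <;> simp [hi, mul_comm]
    · intro l _ hl
      simp [hl]
    · simp


/-- **Counting isometric embeddings of split Hermitian spaces over a finite field.**
Let `k` be a finite field with `q` elements and `(W₁, W₂, B)` a nondegenerate (perfect) split
Hermitian space of rank `m`, i.e. `B : W₁ × W₂ → k` is a perfect `k`-bilinear pairing of
`m`-dimensional spaces.  Let `0 ≤ a ≤ n ≤ m` and let `C` be the bilinear form
`C(x,y) = Σ_{i=1}^{n−a} xᵢ yᵢ` of rank `n − a` on `kⁿ`.  Then the number of pairs of injective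
linear maps `(φ₁ : kⁿ → W₁, φ₂ : kⁿ → W₂)` with `B(φ₁ x, φ₂ y) = C(x, y)` for all `x, y`
equals `q^(2mn − n²) · ∏_{i=0}^{n+a−1} (1 − q^{i−m})`. -/
theorem count_isometric_embeddings_split
    (k : Type*) [Field k] [Fintype k] (q : ℕ) (hq : Fintype.card k = q)
    (m n a : ℕ) (ha : a ≤ n) (hnm : n ≤ m)
    (W₁ W₂ : Type*) [AddCommGroup W₁] [Module k W₁] [AddCommGroup W₂] [Module k W₂]
    [FiniteDimensional k W₁] [FiniteDimensional k W₂]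
    (hW₁ : Module.finrank k W₁ = m) (hW₂ : Module.finrank k W₂ = m)
    (B : W₁ →ₗ[k] W₂ →ₗ[k] k)
    (hB₁ : ∀ x : W₁, (∀ y : W₂, B x y = 0) → x = 0)
    (hB₂ : ∀ y : W₂, (∀ x : W₁, B x y = 0) → y = 0) :
    (Nat.card
        {φ : ((Fin n → k) →ₗ[k] W₁) × ((Fin n → k) →ₗ[k] W₂) //
          Function.Injective φ.1 ∧ Function.Injective φ.2 ∧
          ∀ x y : Fin n → k,
            B (φ.1 x) (φ.2 y) = ∑ i : Fin n, if (i : ℕ) < n - a then x i * y i else 0} : ℚ)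
      = (q : ℚ) ^ (2 * m * n - n ^ 2) *
          ∏ i ∈ Finset.range (n + a), (1 - (q : ℚ) ^ ((i : ℤ) - (m : ℤ))) := by
  subst hq
  obtain ⟨b, rfl⟩ := Nat.exists_eq_add_of_le' ha
  simp only [Nat.add_sub_cancel]
  have : Finite W₁ := Module.finite_of_finite k
  have : Finite W₂ := Module.finite_of_finite k
  let E₁ : (Fin (b + a) → W₁) ≃ ((Fin (b + a) → k) →ₗ[k] W₁) :=
    ((Pi.basisFun k (Fin (b + a))).constr k).toEquiv
  let E₂ : (Fin (b + a) → W₂) ≃ ((Fin (b + a) → k) →ₗ[k] W₂) :=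
    ((Pi.basisFun k (Fin (b + a))).constr k).toEquiv
  have hE₁ : ∀ v, E₁ v = Fintype.linearCombination k v := by
    intro v
    refine LinearMap.ext fun x => ?_
    simp [E₁, Module.Basis.constr_apply_fintype, Fintype.linearCombination_apply]
  have hE₂ : ∀ v, E₂ v = Fintype.linearCombination k v := by
    intro v
    refine LinearMap.ext fun x => ?_
    simp [E₂, Module.Basis.constr_apply_fintype, Fintype.linearCombination_apply]
  let T : (Fin (b + a) → W₁) → (W₂ →ₗ[k] (Fin (b + a) → k)) :=
    fun v => LinearMap.pi (fun i => B (v i))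
  let e : {p : (Fin (b + a) → W₁) × (Fin (b + a) → W₂) // LinearIndependent k p.1 ∧
      LinearIndependent k p.2 ∧
      ∀ i j, T p.1 (p.2 j) i = if (i : ℕ) < b ∧ i = j then 1 else 0} ≃
      {φ : ((Fin (b + a) → k) →ₗ[k] W₁) × ((Fin (b + a) → k) →ₗ[k] W₂) //
          Function.Injective φ.1 ∧ Function.Injective φ.2 ∧
          ∀ x y : Fin (b + a) → k,
            B (φ.1 x) (φ.2 y) = ∑ i : Fin (b + a), if (i : ℕ) < b then x i * y i else 0} :=
    (E₁.prodCongr E₂).subtypeEquiv (by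
      rintro ⟨v, w⟩
      simp only [Equiv.prodCongr_apply, Prod.map_apply, hE₁, hE₂]
      rw [cis_inj, cis_inj, cis_cond]
      rfl)
  let e' : {p : (Fin (b + a) → W₁) × (Fin (b + a) → W₂) // LinearIndependent k p.1 ∧
      LinearIndependent k p.2 ∧
      ∀ i j, T p.1 (p.2 j) i = if (i : ℕ) < b ∧ i = j then 1 else 0} ≃
      Σ v : {v : Fin (b + a) → W₁ // LinearIndependent k v},
        {w : Fin (b + a) → W₂ // LinearIndependent k w ∧
          ∀ i j, T v.1 (w j) i = if (i : ℕ) < b ∧ i = j then 1 else 0} :=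
    { toFun := fun p => ⟨⟨p.1.1, p.2.1⟩, ⟨p.1.2, p.2.2⟩⟩
      invFun := fun s => ⟨(s.1.1, s.2.1), s.1.2, s.2.2⟩
      left_inv := fun _ => rfl
      right_inv := fun _ => rfl }
  have := Fintype.ofFinite {v : Fin (b + a) → W₁ // LinearIndependent k v}
  rw [← Nat.card_congr e, Nat.card_congr e', Nat.card_sigma, Nat.cast_sum]
  obtain ⟨d, rfl⟩ := Nat.exists_eq_add_of_le hnm
  have hfib : ∀ v : {v : Fin (b + a) → W₁ // LinearIndependent k v},
      (Nat.card {w : Fin (b + a) → W₂ // LinearIndependent k w ∧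
          ∀ i j, T v.1 (w j) i = if (i : ℕ) < b ∧ i = j then 1 else 0} : ℚ) =
      ((Fintype.card k : ℚ) ^ d) ^ b *
        ∏ i ∈ Finset.range a, ((Fintype.card k : ℚ) ^ d - (Fintype.card k : ℚ) ^ i) := by
    intro v
    have hs : Function.Surjective (T v.1) := cis_surj (hW₁.trans hW₂.symm) B hB₂ v.1 v.2
    have hd : Module.finrank k (LinearMap.ker (T v.1)) = d := by
      have h := (T v.1).finrank_range_add_finrank_ker
      rw [LinearMap.range_eq_top.2 hs, finrank_top, hW₂] at h
      simpa using h
    rw [cis_fiber _ hs, hd]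
  rw [Finset.sum_congr rfl fun v _ => hfib v, Finset.sum_const, nsmul_eq_mul, Finset.card_univ,
    ← Nat.card_eq_fintype_card, cis_card_LI, hW₁]
  have hq0 : (Fintype.card k : ℚ) ≠ 0 := by
    exact_mod_cast Fintype.card_ne_zero
  generalize (Fintype.card k : ℚ) = q at hq0 ⊢
  have hP : ∀ (N M s r : ℕ), r = M + s → ∏ i ∈ Finset.range N, (q ^ M - q ^ i) =
      q ^ (M * N) * ∏ i ∈ Finset.range N, (1 - q ^ (((s + i : ℕ) : ℤ) - (r : ℤ))) := by
    rintro N M s r rfl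
    rw [pow_mul, ← Finset.card_range N, ← Finset.prod_const, Finset.card_range,
      ← Finset.prod_mul_distrib]
    refine Finset.prod_congr rfl fun i _ => ?_
    rw [mul_sub, mul_one]
    congr 1
    rw [← zpow_natCast q M, ← zpow_add₀ hq0, ← zpow_natCast q i]
    congr 1
    push_cast
    ring
  rw [hP (b + a) (b + a + d) 0 (b + a + d) (by ring), hP a d (b + a) (b + a + d) (by ring),
    Finset.prod_range_add _ (b + a) a]
  have hexp : 2 * (b + a + d) * (b + a) - (b + a) ^ 2 =
      (b + a + d) * (b + a) + d * b + d * a := by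
    apply Nat.sub_eq_of_eq_add
    ring
  rw [hexp, pow_add, pow_add, ← pow_mul]
  simp only [Nat.zero_add]
  ring
end

section
/- Let p be a prime, q a power of p, and κ a field of characteristic p. Let V be a κ-vector space, let V₁ and V₂ be finite-dimensional κ-subspaces of V, and let τ : V₁ → V be an injective additive map whose image is contained in V₂ and which is semilinear over the q-power Frobenius of κ, i.e. τ(c·x) = c^q · τ(x) for all c ∈ κ and x ∈ V₁. Then the set {x ∈ V₁ : τ(x) = x} is finite. -/
/-- **Finiteness of fixed points of a Frobenius-semilinear map.**
Let `κ` be a field of characteristic `p` and `q` a (positive) power of `p`.  Let `V` be a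
`κ`-vector space, `V₁, V₂ ⊆ V` finite-dimensional subspaces, and `τ : V₁ → V` an injective
additive map with image contained in `V₂` that is semilinear over the `q`-power Frobenius,
i.e. `τ(c • x) = c^q • τ(x)`.  Then the set `{x ∈ V₁ : τ(x) = x}` is finite. -/
theorem finite_fixed_points_of_frobenius_semilinear
    (p : ℕ) (hp : p.Prime) (q e : ℕ) (he : 1 ≤ e) (hq : q = p ^ e)
    (κ : Type*) [Field κ] [CharP κ p]
    (V : Type*) [AddCommGroup V] [Module κ V]
    (V₁ V₂ : Submodule κ V) [FiniteDimensional κ V₁] [FiniteDimensional κ V₂]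
    (τ : V₁ → V)
    (hinj : Function.Injective τ)
    (hadd : ∀ x y : V₁, τ (x + y) = τ x + τ y)
    (himage : ∀ x : V₁, τ x ∈ V₂)
    (hsemi : ∀ (c : κ) (x : V₁), τ (c • x) = c ^ q • τ x) :
    {x : V₁ | τ x = (x : V)}.Finite := by
  have hq1 : 1 < q := hq ▸ Nat.one_lt_pow (by omega) hp.one_lt
  have hfin : {c : κ | c ^ q = c}.Finite := by
    have hne : (Polynomial.X ^ q - Polynomial.X : Polynomial κ) ≠ 0 :=
      FiniteField.X_pow_card_sub_X_ne_zero κ hq1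
    refine (Polynomial.finite_setOf_isRoot hne).subset ?_
    intro c hc
    have hc' : c ^ q = c := hc
    simp [Polynomial.IsRoot, hc']
  obtain ⟨b, hbS, hspan, hli⟩ := exists_linearIndependent κ {x : V₁ | τ x = (x : V)}
  have hbf : Finite b := hli.finite
  have := Fintype.ofFinite b
  let T : V₁ →+ V := AddMonoidHom.mk' τ hadd
  refine ((Set.Finite.pi (fun _ : b => hfin)).image
    (fun c : b → κ => ∑ i, c i • (i : V₁))).subset ?_
  intro x hx
  have hx' : x ∈ Submodule.span κ (Set.range (Subtype.val : b → V₁)) := by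
    rw [Subtype.range_coe, hspan]
    exact Submodule.subset_span hx
  obtain ⟨c, hc⟩ := (Submodule.mem_span_range_iff_exists_fun κ).1 hx'
  refine ⟨c, ?_, hc⟩
  have h1 : τ x = ∑ i : b, c i ^ q • ((i : V₁) : V) := by
    change T x = _
    rw [← hc, map_sum]
    refine Finset.sum_congr rfl fun i _ => ?_
    change τ _ = _
    rw [hsemi, hbS i.2]
  have h2 : ∑ i : b, c i ^ q • (i : V₁) = ∑ i : b, c i • (i : V₁) := by
    rw [hc]
    apply Subtype.ext
    rw [← (show τ x = (x : V) from hx), h1]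
    simp
  have h3 : ∑ i : b, (c i ^ q - c i) • (i : V₁) = 0 := by
    simp only [sub_smul, Finset.sum_sub_distrib, h2, sub_self]
  have h4 := Fintype.linearIndependent_iff.1 hli _ h3
  intro i _
  exact sub_eq_zero.1 (h4 i)
end

section
/- Let q be an odd prime power, k' = 𝔽_{q²} with involution σ(c) = c^q, and let V be a finite-dimensional k'-vector space equipped with a nondegenerate Hermitian form h : V × V → k' (σ-semilinear in the first variable, k'-linear in the second, with h(y, x) = σ(h(x, y)) for all x, y). Let U(V, h) = {g ∈ GL(V) : h(gx, gy) = h(x, y) for all x, y ∈ V}. Then: (i) two nilpotent h-self-adjoint endomorphisms e, e' of V (i.e. h(ex, y) = h(x, ey) for all x, y) are conjugate under U(V, h) if and only if they are conjugate under GL(V), i.e. if and only if they have the same Jordan type; and (ii) every nilpotent k'-linear endomorphism of V is GL(V)-conjugate to some h-self-adjoint nilpotent endomorphism. Consequently, the U(V, h)-orbits of h-self-adjoint nilpotent endomorphisms of V are in bijection with the partitions of dim_{k'} V, via Jordan type. -/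
/-- A binary quadratic equation `x² - δ y² = u` over a finite field of odd characteristic. -/
theorem un_field_norm {F : Type*} [Field F] [Finite F] (p : ℕ) [Fact p.Prime] (hp2 : p ≠ 2)
    (hchar : (p : F) = 0) (u δ : F) (hδ : δ ≠ 0) : ∃ x y : F, x ^ 2 - δ * y ^ 2 = u := by
  classical
  have := Fintype.ofFinite F
  have hc : CharP F p := (CharP.charP_iff_prime_eq_zero Fact.out).mpr hchar
  have hr : ringChar F ≠ 2 := by rw [ringChar.eq F p]; exact hp2
  obtain ⟨a, b, hab⟩ := FiniteField.exists_root_sum_quadratic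
    (f := (Polynomial.X ^ 2 - Polynomial.C u : Polynomial F))
    (g := (Polynomial.C (-δ) * Polynomial.X ^ 2 : Polynomial F))
    (Polynomial.degree_X_pow_sub_C (by norm_num) u)
    (Polynomial.degree_C_mul_X_pow 2 (neg_ne_zero.mpr hδ))
    (FiniteField.odd_card_of_char_ne_two hr)
  refine ⟨a, b, ?_⟩
  simp at hab
  linear_combination hab

theorem un_ring_norm {R : Type*} [CommRing R] [Finite R] (p : ℕ) [hp : Fact p.Prime] (hp2 : p ≠ 2)
    (hchar : (p : R) = 0) (u δ : R) (hu : IsUnit u) (hδ : IsUnit δ) :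
    ∃ x y : R, x ^ 2 - δ * y ^ 2 = u := by
  classical
  rcases subsingleton_or_nontrivial R with hs | hs
  · exact ⟨0, 0, Subsingleton.elim _ _⟩
  have hc : CharP R p := (CharP.charP_iff_prime_eq_zero Fact.out).mpr hchar
  have key : ∀ I : MaximalSpectrum R, ∃ x y : R ⧸ I.asIdeal,
      x ^ 2 - (Ideal.Quotient.mk I.asIdeal δ) * y ^ 2 = Ideal.Quotient.mk I.asIdeal u := by
    intro I
    let : Field (R ⧸ I.asIdeal) := Ideal.Quotient.field I.asIdeal
    have : Finite (R ⧸ I.asIdeal) := Finite.of_surjective _ Ideal.Quotient.mk_surjective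
    refine un_field_norm p hp2 ?_ _ _ ?_
    · have := congrArg (Ideal.Quotient.mk I.asIdeal) hchar
      rw [map_natCast, map_zero] at this
      exact this
    · exact (hδ.map (Ideal.Quotient.mk I.asIdeal)).ne_zero
  choose X Y hXY using key
  obtain ⟨x', hx⟩ := (IsArtinianRing.quotNilradicalEquivPi R).surjective X
  obtain ⟨y', hy⟩ := (IsArtinianRing.quotNilradicalEquivPi R).surjective Y
  obtain ⟨x, rfl⟩ := Ideal.Quotient.mk_surjective x'
  obtain ⟨y, rfl⟩ := Ideal.Quotient.mk_surjective y'
  have hnil : IsNilpotent (x ^ 2 - δ * y ^ 2 - u) := by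
    rw [← mem_nilradical, ← Ideal.Quotient.eq_zero_iff_mem]
    apply (IsArtinianRing.quotNilradicalEquivPi R).injective
    rw [map_zero]
    funext I
    have h1 : Ideal.Quotient.mk I.asIdeal x = X I := congrFun hx I
    have h2 : Ideal.Quotient.mk I.asIdeal y = Y I := congrFun hy I
    have h3 := hXY I
    rw [← h1, ← h2] at h3
    change Ideal.Quotient.mk I.asIdeal (x ^ 2 - δ * y ^ 2 - u) = 0
    simp only [map_sub, map_mul, map_pow]
    rw [h3, sub_self]
  obtain ⟨v, hv⟩ := hu.exists_right_inv
  obtain ⟨n, hn⟩ := hnil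
  -- `w = v (x² - δ y²)` is unipotent, hence of odd order
  set m := v * (x ^ 2 - δ * y ^ 2 - u) with hm
  have hw : (1 + m) ^ (p ^ n) = 1 := by
    rw [add_pow_char_pow, one_pow, hm, mul_pow]
    have : (x ^ 2 - δ * y ^ 2 - u) ^ (p ^ n) = 0 :=
      pow_eq_zero_of_le (Nat.lt_pow_self hp.out.one_lt).le hn
    rw [this]; simp
  obtain ⟨t, ht⟩ : Odd (p ^ n) := (hp.out.odd_of_ne_two hp2).pow
  have hxy : x ^ 2 - δ * y ^ 2 = u * (1 + m) := by
    rw [hm]; linear_combination (- (x ^ 2 - δ * y ^ 2 - u)) * hv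
  refine ⟨x * (1 + m) ^ t, y * (1 + m) ^ t, ?_⟩
  have : (x * (1 + m) ^ t) ^ 2 - δ * (y * (1 + m) ^ t) ^ 2
      = (x ^ 2 - δ * y ^ 2) * (1 + m) ^ (2 * t) := by ring
  rw [this, hxy, mul_assoc, ← pow_succ', ← ht, hw, mul_one]

/-- Nondegenerate Hermitian forms with respect to `c ↦ c ^ q`. -/
structure UnHerm (q : ℕ) (K : Type*) [Field K] (V : Type*) [AddCommGroup V] [Module K V]
    (h : V → V → K) : Prop where
  addl : ∀ x y z : V, h (x + y) z = h x z + h y z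
  addr : ∀ x y z : V, h x (y + z) = h x y + h x z
  smull : ∀ (c : K) (x y : V), h (c • x) y = c ^ q * h x y
  smulr : ∀ (c : K) (x y : V), h x (c • y) = c * h x y
  conj : ∀ x y : V, h y x = (h x y) ^ q
  nd : ∀ x : V, (∀ y : V, h x y = 0) → x = 0

namespace UnHerm

variable {q : ℕ} {K : Type*} [Field K] {V : Type*} [AddCommGroup V] [Module K V] {h h' : V → V → K}

theorem zerol (H : UnHerm q K V h) (y : V) : h 0 y = 0 := by
  have := H.addl 0 0 y
  rw [add_zero] at this
  simpa using this

theorem zeror (H : UnHerm q K V h) (y : V) : h y 0 = 0 := by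
  have := H.addr y 0 0
  rw [add_zero] at this
  simpa using this

theorem negl (H : UnHerm q K V h) (x y : V) : h (-x) y = - h x y := by
  have := H.addl (-x) x y
  rw [neg_add_cancel, H.zerol] at this
  linear_combination -this

theorem negr (H : UnHerm q K V h) (x y : V) : h x (-y) = - h x y := by
  have := H.addr x (-y) y
  rw [neg_add_cancel, H.zeror] at this
  linear_combination -this

theorem ext (H : UnHerm q K V h) {x x' : V} (hx : ∀ y, h x y = h x' y) : x = x' := by
  rw [← sub_eq_zero]
  apply H.nd
  intro y
  rw [sub_eq_add_neg, H.addl, H.negl, hx]; ring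

theorem exists_rep [Finite K] [FiniteDimensional K V] (H : UnHerm q K V h) (f : V →ₗ[K] K) :
    ∃ a, ∀ y, h a y = f y := by
  have : Finite V := Module.finite_of_finite K
  let T : V → (V →ₗ[K] K) := fun x =>
    { toFun := h x, map_add' := H.addr x, map_smul' := fun c y => H.smulr c x y }
  have hT : Function.Injective T := fun x x' hx => H.ext fun y => congrArg (fun g => g y) hx
  let ι : (V →ₗ[K] K) ≃ₗ[K] V := LinearEquiv.ofFinrankEq _ _ Subspace.dual_finrank_eq
  have : Function.Surjective T := by
    have h1 : Function.Surjective (ι ∘ T) :=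
      Finite.surjective_of_injective (ι.injective.comp hT)
    exact (Function.Surjective.of_comp_iff' ι.bijective T).mp h1
  obtain ⟨a, ha⟩ := this f
  exact ⟨a, fun y => congrArg (fun g => g y) ha⟩

theorem exists_op [Finite K] [FiniteDimensional K V] (H : UnHerm q K V h) (H' : UnHerm q K V h') :
    ∃ A : Module.End K V, ∀ x y, h (A x) y = h' x y := by
  have : ∀ x, ∃ a, ∀ y, h a y = h' x y := fun x => H.exists_rep
    { toFun := h' x, map_add' := H'.addr x, map_smul' := fun c y => H'.smulr c x y }
  choose A hA using this
  refine ⟨{ toFun := A, map_add' := ?_, map_smul' := ?_ }, hA⟩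
  · intro x y
    apply H.ext
    intro z
    rw [H.addl, hA, hA, hA, H'.addl]
  · intro c x
    apply H.ext
    intro z
    rw [RingHom.id_apply, H.smull, hA, hA, H'.smull]

theorem equiv [Finite K] [FiniteDimensional K V] (H : UnHerm q K V h) (H' : UnHerm q K V h')
    (p : ℕ) [hp : Fact p.Prime] (hp2 : p ≠ 2) (hchar : (p : K) = 0)
    (ε : K) (hε0 : ε ≠ 0) (hε : ε ^ q = - ε)
    (e : Module.End K V) (he : ∀ x y, h (e x) y = h x (e y))
    (he' : ∀ x y, h' (e x) y = h' x (e y)) :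
    ∃ B : V ≃ₗ[K] V, (∀ x y, h (B x) (B y) = h' x y) ∧ ∀ x, B (e x) = e (B x) := by
  have : Finite V := Module.finite_of_finite K
  obtain ⟨A, hA⟩ := H.exists_op H'
  have hAsa : ∀ x y, h (A x) y = h x (A y) := fun x y => by
    rw [hA, H'.conj y x, ← hA, ← H.conj]
  have hAe : ∀ x, A (e x) = e (A x) := fun x => H.ext fun y => by
    rw [hA, he', ← hA, ← he]
  have hAinj : Function.Injective A := fun x x' hx => H'.ext fun y => by rw [← hA, ← hA, hx]
  let D : Module.End K V := (ε ^ 2) • (1 : Module.End K V)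
  have hDapp : ∀ x, D x = (ε ^ 2) • x := fun x => rfl
  have hεq : (ε ^ 2) ^ q = ε ^ 2 := by rw [← pow_mul, mul_comm, pow_mul, hε]; ring
  let S : Set (Module.End K V) := {A, D}
  have hcomm : ∀ x ∈ S, ∀ y ∈ S, x * y = y * x := by
    rintro x (rfl | rfl) y (rfl | rfl) <;> first | rfl | (simp [D])
  let : CommRing (Subring.closure S) := Subring.closureCommRingOfComm hcomm
  have hfinE : Finite (Module.End K V) := Finite.of_injective (fun f x => f x) DFunLike.coe_injective
  have hsa : ∀ T ∈ Subring.closure S, ∀ x y, h (T x) y = h x (T y) := by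
    intro T hT
    induction hT using Subring.closure_induction with
    | mem T hT =>
      rcases hT with rfl | rfl
      · exact hAsa
      · intro x y
        rw [hDapp, hDapp, H.smull, H.smulr, hεq]
    | zero => intro x y; simp [H.zerol, H.zeror]
    | one => intro x y; rfl
    | add T U _ _ hT hU => intro x y; simp [H.addl, H.addr, hT, hU]
    | neg T _ hT => intro x y; simp [H.negl, H.negr, hT]
    | mul T U hT' hU' hT hU =>
      intro x y
      have : T * U = U * T := congrArg Subtype.val
        (mul_comm (⟨T, hT'⟩ : Subring.closure S) ⟨U, hU'⟩)
      rw [this, Module.End.mul_apply, hU, hT, ← Module.End.mul_apply, this]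
  have hce : ∀ T ∈ Subring.closure S, ∀ x, T (e x) = e (T x) := by
    intro T hT
    induction hT using Subring.closure_induction with
    | mem T hT =>
      rcases hT with rfl | rfl
      · exact hAe
      · intro x; simp [hDapp]
    | zero => intro x; simp
    | one => intro x; rfl
    | add T U _ _ hT hU => intro x; simp [hT, hU]
    | neg T _ hT => intro x; simp [hT]
    | mul T U hT' hU' hT hU => intro x; simp [hT, hU]
  have hunit : ∀ T : Subring.closure S, Function.Injective T.1 → IsUnit T := by
    intro T hT
    refine IsArtinianRing.isUnit_of_mem_nonZeroDivisors (mem_nonZeroDivisors_iff_right.mpr ?_)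
    intro U hU
    rw [mul_comm] at hU
    apply Subtype.ext
    ext x
    apply hT
    have := congrArg (fun W : Subring.closure S => W.1 x) hU
    simpa using this
  have hDinj : Function.Injective D := by
    intro x y hxy
    rw [hDapp, hDapp] at hxy
    exact smul_right_injective V (pow_ne_zero 2 hε0) hxy
  let A' : Subring.closure S := ⟨A, Subring.subset_closure (by simp [S])⟩
  let D' : Subring.closure S := ⟨D, Subring.subset_closure (by simp [S])⟩
  have hcharR : (p : Subring.closure S) = 0 := by
    apply Subtype.ext
    ext x
    have h1 : (((p : Subring.closure S) : Module.End K V)) = (p : Module.End K V) := by push_cast; rfl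
    rw [h1]
    have : (p : Module.End K V) x = (p : K) • x := by
      rw [Module.End.natCast_apply, Nat.cast_smul_eq_nsmul]
    rw [this, hchar]; simp
  obtain ⟨X, Y, hXY⟩ := un_ring_norm p hp2 hcharR A' D' (hunit _ hAinj) (hunit _ hDinj)
  have hXYa : ∀ x, A x = X.1 (X.1 x) - (ε ^ 2) • Y.1 (Y.1 x) := by
    intro x
    have := congrArg (fun W : Subring.closure S => W.1 x) hXY
    rw [pow_two, pow_two] at this
    exact this.symm
  have hXYc : ∀ x, X.1 (Y.1 x) = Y.1 (X.1 x) := fun x =>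
    congrArg (fun W : Subring.closure S => W.1 x) (mul_comm X Y)
  let B : Module.End K V := X.1 + ε • Y.1
  have hBapp : ∀ x, B x = X.1 x + ε • Y.1 x := fun x => rfl
  have hB : ∀ x y, h (B x) (B y) = h' x y := by
    intro x y
    rw [← hA, hXYa, hBapp, hBapp, sub_eq_add_neg, ← smul_neg]
    simp only [H.addl, H.addr, H.smull, H.smulr, H.negl, ← hsa X.1 X.2, ← hsa Y.1 Y.2, hXYc, hεq, hε]
    ring
  have hBinj : Function.Injective B := fun x x' hx => H'.ext fun y => by rw [← hB, ← hB, hx]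
  refine ⟨LinearEquiv.ofInjectiveEndo B hBinj, fun x y => hB x y, fun x => ?_⟩
  change B (e x) = e (B x)
  rw [hBapp, hBapp, hce _ X.2, hce _ Y.2, map_add, map_smul]

end UnHerm

open Polynomial in
/-- Nondegenerate Hermitian forms on `K[X]`-modules for which `X` is self-adjoint. -/
structure UnPoly (q : ℕ) (K : Type*) [Field K] (M : Type*) [AddCommGroup M] [Module K[X] M]
    (h : M → M → K) : Prop where
  addl : ∀ x y z : M, h (x + y) z = h x z + h y z
  addr : ∀ x y z : M, h x (y + z) = h x y + h x z
  smull : ∀ (c : K) (x y : M), h ((C c : K[X]) • x) y = c ^ q * h x y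
  smulr : ∀ (c : K) (x y : M), h x ((C c : K[X]) • y) = c * h x y
  conj : ∀ x y : M, h y x = (h x y) ^ q
  nd : ∀ x : M, (∀ y : M, h x y = 0) → x = 0
  sa : ∀ x y : M, h ((X : K[X]) • x) y = h x ((X : K[X]) • y)

open Polynomial in
theorem UnPoly.cyclic {q : ℕ} {K : Type*} [Field K] (σ : K →+* K) (hσ : ∀ c, σ c = c ^ q)
    (hσσ : ∀ c, σ (σ c) = c) (n : ℕ) :
    ∃ h, UnPoly q K (K[X] ⧸ Submodule.span K[X] {(X : K[X]) ^ n}) h := by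
  have hq : q ≠ 0 := by
    rintro rfl
    have := hσ 0
    simp at this
  have hmk : ∀ f g : K[X], (Submodule.Quotient.mk f : K[X] ⧸ Submodule.span K[X] {(X : K[X]) ^ n})
      = Submodule.Quotient.mk g ↔ X ^ n ∣ f - g := by
    intro f g
    rw [Submodule.Quotient.eq]
    exact Ideal.mem_span_singleton
  rcases Nat.eq_zero_or_pos n with rfl | hn
  · have hsub : ∀ x : K[X] ⧸ Submodule.span K[X] {(X : K[X]) ^ 0}, x = 0 := by
      intro x
      obtain ⟨f, rfl⟩ := Submodule.Quotient.mk_surjective _ x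
      rw [← Submodule.Quotient.mk_zero, hmk]
      simp
    exact ⟨fun _ _ => 0, by simp, by simp, by simp, by simp, by simp [hq], fun x _ => hsub x, by simp⟩
  let L : K[X] → K[X] → K := fun f g => (f.map σ * g).coeff (n - 1)
  have hL : ∀ f f' g g' : K[X], X ^ n ∣ f - f' → X ^ n ∣ g - g' → L f g = L f' g' := by
    intro f f' g g' hf hg
    have h1 : (X ^ n : K[X]) ∣ (f.map σ * g) - (f'.map σ * g') := by
      have h2 : (X ^ n : K[X]) ∣ f.map σ - f'.map σ := by
        have := Polynomial.map_dvd σ hf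
        simpa using this
      have : (f.map σ * g) - (f'.map σ * g') = (f.map σ - f'.map σ) * g + f'.map σ * (g - g') := by
        ring
      rw [this]
      exact dvd_add (Dvd.dvd.mul_right h2 _) (Dvd.dvd.mul_left hg _)
    have := X_pow_dvd_iff.mp h1 (n - 1) (by omega)
    rw [coeff_sub, sub_eq_zero] at this
    exact this
  let h : (K[X] ⧸ Submodule.span K[X] {(X : K[X]) ^ n}) →
      (K[X] ⧸ Submodule.span K[X] {(X : K[X]) ^ n}) → K := fun x y =>
    L (Function.surjInv (Submodule.Quotient.mk_surjective _) x)
      (Function.surjInv (Submodule.Quotient.mk_surjective _) y)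
  have hh : ∀ f g, h (Submodule.Quotient.mk f) (Submodule.Quotient.mk g) = L f g := by
    intro f g
    apply hL <;> exact (hmk _ _).mp (Function.surjInv_eq _ _)
  have surj := Submodule.Quotient.mk_surjective (Submodule.span K[X] {(X : K[X]) ^ n})
  refine ⟨h, ?_, ?_, ?_, ?_, ?_, ?_, ?_⟩
  · intro x y z
    obtain ⟨x, rfl⟩ := surj x
    obtain ⟨y, rfl⟩ := surj y
    obtain ⟨z, rfl⟩ := surj z
    rw [← Submodule.Quotient.mk_add, hh, hh, hh]
    simp [L, add_mul]
  · intro x y z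
    obtain ⟨x, rfl⟩ := surj x
    obtain ⟨y, rfl⟩ := surj y
    obtain ⟨z, rfl⟩ := surj z
    rw [← Submodule.Quotient.mk_add, hh, hh, hh]
    simp [L, mul_add]
  · intro c x y
    obtain ⟨x, rfl⟩ := surj x
    obtain ⟨y, rfl⟩ := surj y
    rw [← Submodule.Quotient.mk_smul, hh, hh]
    simp only [L, smul_eq_mul, Polynomial.map_mul, Polynomial.map_C]
    rw [mul_assoc, coeff_C_mul, hσ]
  · intro c x y
    obtain ⟨x, rfl⟩ := surj x
    obtain ⟨y, rfl⟩ := surj y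
    rw [← Submodule.Quotient.mk_smul, hh, hh]
    simp only [L, smul_eq_mul]
    rw [mul_left_comm, coeff_C_mul]
  · intro x y
    obtain ⟨x, rfl⟩ := surj x
    obtain ⟨y, rfl⟩ := surj y
    rw [hh, hh, ← hσ]
    simp only [L]
    rw [← coeff_map, Polynomial.map_mul, Polynomial.map_map]
    have : σ.comp σ = RingHom.id K := RingHom.ext hσσ
    rw [this, Polynomial.map_id, mul_comm]
  · intro x hx
    obtain ⟨x, rfl⟩ := surj x
    rw [← Submodule.Quotient.mk_zero, hmk, sub_zero, X_pow_dvd_iff]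
    intro d hd
    have := hx (Submodule.Quotient.mk (X ^ (n - 1 - d)))
    rw [hh] at this
    simp only [L] at this
    rw [coeff_mul_X_pow', if_pos (by omega), coeff_map,
      show n - 1 - (n - 1 - d) = d by omega] at this
    exact σ.injective (by rw [this, map_zero])
  · intro x y
    obtain ⟨x, rfl⟩ := surj x
    obtain ⟨y, rfl⟩ := surj y
    rw [← Submodule.Quotient.mk_smul, ← Submodule.Quotient.mk_smul, hh, hh]
    simp only [L, smul_eq_mul, Polynomial.map_mul, Polynomial.map_X]
    congr 1
    ring

open Polynomial in
theorem UnPoly.directSum {q : ℕ} {K : Type*} [Field K] (σ : K →+* K) (hσ : ∀ c, σ c = c ^ q)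
    {d : ℕ} {M : Fin d → Type*} [∀ i, AddCommGroup (M i)] [∀ i, Module K[X] (M i)]
    {h : ∀ i, M i → M i → K} (H : ∀ i, UnPoly q K (M i) (h i)) :
    UnPoly q K (DirectSum (Fin d) M) (fun x y => ∑ i, h i (x i) (y i)) := by
  have hz : ∀ i x, h i x 0 = 0 := fun i x => by
    have := (H i).addr x 0 0
    rw [add_zero] at this
    simpa using this
  refine ⟨?_, ?_, ?_, ?_, ?_, ?_, ?_⟩
  · intro x y z; simp [(H _).addl, Finset.sum_add_distrib]
  · intro x y z; simp [(H _).addr, Finset.sum_add_distrib]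
  · intro c x y; simp [DirectSum.smul_apply, (H _).smull, Finset.mul_sum]
  · intro c x y; simp [DirectSum.smul_apply, (H _).smulr, Finset.mul_sum]
  · intro x y
    rw [← hσ, map_sum]
    exact Finset.sum_congr rfl fun i _ => by rw [hσ, (H i).conj]
  · intro x hx
    apply DFinsupp.ext
    intro i
    apply (H i).nd
    intro y
    have := hx (DirectSum.of M i y)
    rw [Finset.sum_eq_single i] at this
    · simpa using this
    · intro j _ hj
      rw [DirectSum.of_eq_of_ne _ _ _ hj, hz]
    · simp
  · intro x y; simp [DirectSum.smul_apply, (H _).sa]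

open Polynomial in
theorem UnHerm.exists_of_nilpotent {q : ℕ} {K : Type*} [Field K] (σ : K →+* K)
    (hσ : ∀ c, σ c = c ^ q) (hσσ : ∀ c, σ (σ c) = c)
    {V : Type*} [AddCommGroup V] [Module K V] [FiniteDimensional K V]
    (e : Module.End K V) (he : IsNilpotent e) :
    ∃ h, UnHerm q K V h ∧ ∀ x y, h (e x) y = h x (e y) := by
  classical
  obtain ⟨N, hN⟩ := he
  have htors : Module.IsTorsion' (Module.AEval' e) (Submonoid.powers (X : K[X])) := by
    rw [Submodule.isTorsion'_powers_iff]
    intro x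
    obtain ⟨x, rfl⟩ := (Module.AEval'.of e).surjective x
    refine ⟨N, ?_⟩
    rw [Module.AEval'.X_pow_smul_of, hN]
    simp
  obtain ⟨d, k, ⟨Φ⟩⟩ := Module.torsion_by_prime_power_decomposition (irreducible_X) htors
  choose h H using fun i => UnPoly.cyclic (q := q) σ hσ hσσ (k i)
  have G := UnPoly.directSum σ hσ H
  let Ψ : V → _ := fun x => Φ (Module.AEval'.of e x)
  have hadd : ∀ x y, Ψ (x + y) = Ψ x + Ψ y := fun x y => by simp [Ψ]
  have hsmul : ∀ (c : K) x, Ψ (c • x) = (C c : K[X]) • Ψ x := fun c x => by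
    simp only [Ψ]
    rw [← map_smul Φ, map_smul]
    congr 1
    exact (Module.AEval.C_smul e c _).symm
  have hX : ∀ x, Ψ (e x) = (X : K[X]) • Ψ x := fun x => by
    simp only [Ψ]
    rw [← map_smul Φ, Module.AEval'.X_smul_of]
  have hsurj : Function.Surjective Ψ := Φ.surjective.comp (Module.AEval'.of e).surjective
  have hinj : ∀ x, Ψ x = 0 → x = 0 := fun x hx => by
    simpa [Ψ] using hx
  refine ⟨fun x y => ∑ i, h i (Ψ x i) (Ψ y i), ⟨?_, ?_, ?_, ?_, ?_, ?_⟩, ?_⟩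
  · intro x y z; rw [hadd]; exact G.addl _ _ _
  · intro x y z; rw [hadd]; exact G.addr _ _ _
  · intro c x y; rw [hsmul]; exact G.smull _ _ _
  · intro c x y; rw [hsmul]; exact G.smulr _ _ _
  · intro x y; exact G.conj _ _
  · intro x hx
    apply hinj
    apply G.nd
    intro y
    obtain ⟨y, rfl⟩ := hsurj y
    exact hx y
  · intro x y; beta_reduce; rw [hX, hX]; exact G.sa _ _

/-- **Nilpotent orbits of the finite unitary group.**
Let `q` be an odd prime power, `K = 𝔽_{q²}` with involution `σ(c) = c^q`, and `(V, h)` a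
finite-dimensional nondegenerate Hermitian space over `K`.  Then:
(i) two nilpotent `h`-self-adjoint endomorphisms of `V` are conjugate under the unitary group
`U(V, h)` if and only if they are conjugate under `GL(V)`; and
(ii) every nilpotent endomorphism of `V` is `GL(V)`-conjugate to an `h`-self-adjoint nilpotent
endomorphism.  (Consequently, unitary orbits of self-adjoint nilpotents are classified by the
partitions of `dim V` via Jordan type.) -/
theorem unitary_nilpotent_orbits
    (p e : ℕ) (hp : p.Prime) (q : ℕ) (hq : q = p ^ (e + 1)) (hodd : Odd q)
    (K : Type*) [Field K] [Fintype K] (hK : Fintype.card K = q ^ 2)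
    (V : Type*) [AddCommGroup V] [Module K V] [FiniteDimensional K V]
    (h : V → V → K)
    (haddl : ∀ x y z : V, h (x + y) z = h x z + h y z)
    (haddr : ∀ x y z : V, h x (y + z) = h x y + h x z)
    (hsmull : ∀ (c : K) (x y : V), h (c • x) y = c ^ q * h x y)
    (hsmulr : ∀ (c : K) (x y : V), h x (c • y) = c * h x y)
    (hconj : ∀ x y : V, h y x = (h x y) ^ q)
    (hnd : ∀ x : V, (∀ y : V, h x y = 0) → x = 0) :
    (∀ e₁ e₂ : Module.End K V, IsNilpotent e₁ → IsNilpotent e₂ →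
        (∀ x y : V, h (e₁ x) y = h x (e₁ y)) → (∀ x y : V, h (e₂ x) y = h x (e₂ y)) →
        ((∃ u : V ≃ₗ[K] V, (∀ x y : V, h (u x) (u y) = h x y) ∧
            ∀ x : V, u (e₁ (u.symm x)) = e₂ x) ↔
          (∃ φ : V ≃ₗ[K] V, ∀ x : V, φ (e₁ (φ.symm x)) = e₂ x)))
    ∧ (∀ e₁ : Module.End K V, IsNilpotent e₁ →
        ∃ (e₀ : Module.End K V) (φ : V ≃ₗ[K] V),
          IsNilpotent e₀ ∧ (∀ x y : V, h (e₀ x) y = h x (e₀ y)) ∧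
          ∀ x : V, φ (e₁ (φ.symm x)) = e₀ x) := by
  have hpf : Fact p.Prime := ⟨hp⟩
  have hchK : CharP K p := charP_of_card_eq_prime_pow (f := (e + 1) * 2)
    (by rw [hK, hq, pow_mul])
  have hp2 : p ≠ 2 := by
    rintro rfl
    rw [hq] at hodd
    exact absurd hodd (by simp [parity_simps])
  have hchar : (p : K) = 0 := CharP.cast_eq_zero K p
  let σ : K →+* K := iterateFrobenius K p (e + 1)
  have hσ : ∀ c, σ c = c ^ q := fun c => by rw [hq]; exact iterateFrobenius_def p (e + 1) c
  have hσσ : ∀ c, σ (σ c) = c := fun c => by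
    rw [hσ, hσ, ← pow_mul, ← pow_two, ← hK, FiniteField.pow_card]
  have hq1 : 1 < q := by
    rw [hq]; exact Nat.one_lt_pow (by omega) hp.one_lt
  obtain ⟨c, hc⟩ : ∃ c : K, c ^ q ≠ c := by
    by_contra! hcon
    have hle := Polynomial.card_roots' (Polynomial.X ^ q - Polynomial.X : Polynomial K)
    have hne := FiniteField.X_pow_card_sub_X_ne_zero K hq1
    rw [FiniteField.X_pow_card_sub_X_natDegree_eq K hq1] at hle
    have h2 : (Finset.univ : Finset K).val ≤
        (Polynomial.X ^ q - Polynomial.X : Polynomial K).roots := by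
      rw [Multiset.le_iff_subset Finset.univ.nodup]
      intro x _
      rw [Polynomial.mem_roots hne]
      simp [hcon x]
    have h3 := Multiset.card_le_card h2
    rw [Finset.card_val, Finset.card_univ, hK] at h3
    nlinarith
  let ε : K := c ^ q - c
  have hε0 : ε ≠ 0 := sub_ne_zero.mpr hc
  have hε : ε ^ q = - ε := by
    have h1 := hσσ c
    rw [← hσ]
    simp only [ε]
    rw [← hσ, map_sub, h1]; ring
  have H : UnHerm q K V h := ⟨haddl, haddr, hsmull, hsmulr, hconj, hnd⟩
  refine ⟨?_, ?_⟩
  · intro e₁ e₂ _ _ h1 h2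
    constructor
    · rintro ⟨u, _, hu⟩
      exact ⟨u, hu⟩
    · rintro ⟨φ, hφ⟩
      have hφe : ∀ x, φ (e₁ x) = e₂ (φ x) := fun x => by
        have := hφ (φ x)
        rwa [φ.symm_apply_apply] at this
      have H' : UnHerm q K V (fun x y => h (φ x) (φ y)) := by
        refine ⟨?_, ?_, ?_, ?_, ?_, ?_⟩
        · intro x y z; simp [haddl]
        · intro x y z; simp [haddr]
        · intro c x y; simp [hsmull]
        · intro c x y; simp [hsmulr]
        · intro x y; exact hconj _ _
        · intro x hx
          apply φ.map_eq_zero_iff.mp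
          apply hnd
          intro y
          have := hx (φ.symm y)
          simpa using this
      obtain ⟨B, hB, hBe⟩ := H.equiv H' p hp2 hchar ε hε0 hε e₁ h1 (fun x y => by
        simp only [hφe, h2])
      refine ⟨B.symm.trans φ, ?_, ?_⟩
      · intro x y
        have := hB (B.symm x) (B.symm y)
        simp only [LinearEquiv.apply_symm_apply] at this
        exact this.symm
      · intro x
        change φ (B.symm (e₁ (B (φ.symm x)))) = e₂ x
        rw [← hBe, B.symm_apply_apply, hφ]
  · intro e₁ hn
    obtain ⟨h', H', he'⟩ := UnHerm.exists_of_nilpotent σ hσ hσσ e₁ hn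
    obtain ⟨B, hB, -⟩ := H.equiv H' p hp2 hchar ε hε0 hε 0
      (fun x y => by simp [H.zerol, H.zeror]) (fun x y => by simp [H'.zerol, H'.zeror])
    refine ⟨B.conj e₁, B, ?_, ?_, ?_⟩
    · obtain ⟨n, hn⟩ := hn
      refine ⟨n, ?_⟩
      have : ∀ m, (B.conj e₁) ^ m = B.conj (e₁ ^ m) := by
        intro m
        exact (map_pow B.conjRingEquiv e₁ m).symm
      rw [this, hn, map_zero]
    · intro x y
      obtain ⟨x, rfl⟩ := B.surjective x
      obtain ⟨y, rfl⟩ := B.surjective y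
      simp only [LinearEquiv.conj_apply_apply, LinearEquiv.symm_apply_apply, hB]
      exact he' x y
    · intro x
      rw [LinearEquiv.conj_apply_apply]
end
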